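/- arXiv:2206.00828 — 9 statements merged into one kernel-verified Lean document; each statement's English description precedes it below -/
import Mathlib

section
/- Let V* be a real constant, κ > 0 a constant, and q : [0,∞) → ℝ a function with q(t) ≥ 0 for all t ≥ 0. Let V : [0,∞) → ℝ be differentiable and satisfy, for all t ≥ 0: V'(t) = −κ·(V(t) − V*) whenever V(t) ≤ V*, and V'(t) = −(1 − exp(−(V(t) − V*)))·q(t) whenever V(t) > V*. Then the function W(t) := (1/2)·(V(t) − V*)² is nonincreasing on [0,∞); in particular |V(t) − V*| ≤ |V(0) − V*| for all t ≥ 0, i.e., the equilibrium V* is Lyapunov stable. -/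
/-- Proposition 2 (Lyapunov stability part): the Lyapunov function
`W(t) = (1/2)(V(t) − V*)²` is nonincreasing along the closed-loop
storage-volume dynamics, hence `|V(t) − V*| ≤ |V(0) − V*|`. -/
theorem storage_volume_lyapunov_stable
    (Vstar κ : ℝ) (hκ : 0 < κ)
    (q : ℝ → ℝ) (hq : ∀ t ≥ (0:ℝ), 0 ≤ q t)
    (V : ℝ → ℝ)
    (hdiff : ∀ t ≥ (0:ℝ), DifferentiableAt ℝ V t)
    (hode1 : ∀ t ≥ (0:ℝ), V t ≤ Vstar → deriv V t = -κ * (V t - Vstar))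
    (hode2 : ∀ t ≥ (0:ℝ), Vstar < V t →
      deriv V t = -(1 - Real.exp (-(V t - Vstar))) * q t) :
    AntitoneOn (fun t => (1/2) * (V t - Vstar)^2) (Set.Ici (0:ℝ)) ∧
    ∀ t ≥ (0:ℝ), |V t - Vstar| ≤ |V 0 - Vstar| := by
  have hder : ∀ t ≥ (0:ℝ), HasDerivAt (fun t => (1/2) * (V t - Vstar)^2)
      ((V t - Vstar) * deriv V t) t := by
    intro t ht
    have h := ((((hdiff t ht).hasDerivAt).sub_const Vstar).pow 2).const_mul (1/2 : ℝ)
    refine h.congr_deriv ?_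
    norm_num
    ring
  have hanti : AntitoneOn (fun t => (1/2) * (V t - Vstar)^2) (Set.Ici (0:ℝ)) := by
    apply antitoneOn_of_deriv_nonpos (convex_Ici 0)
    · intro t ht
      exact (hder t ht).continuousAt.continuousWithinAt
    · intro t ht
      exact (hder t (interior_subset ht)).differentiableAt.differentiableWithinAt
    · intro t ht
      have ht0 : t ≥ 0 := interior_subset ht
      rw [(hder t ht0).deriv]
      rcases le_or_gt (V t) Vstar with h | h
      · rw [hode1 t ht0 h]
        nlinarith [mul_nonneg hκ.le (sq_nonneg (V t - Vstar))]
      · rw [hode2 t ht0 h]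
        have he : Real.exp (-(V t - Vstar)) ≤ 1 := Real.exp_le_one_iff.mpr (by linarith)
        have h1 := mul_nonneg (mul_nonneg (sub_nonneg.mpr h.le) (sub_nonneg.mpr he)) (hq t ht0)
        linarith
  refine ⟨hanti, fun t ht => ?_⟩
  have h := hanti (Set.mem_Ici.mpr le_rfl) (Set.mem_Ici.mpr ht) ht
  simp only at h
  exact sq_le_sq.mp (by linarith)
end

section
/- Let V* be a real constant, κ > 0 and c > 0 constants, and q : [0,∞) → ℝ a continuous function with q(t) ≥ c for all t ≥ 0. Let V : [0,∞) → ℝ be differentiable and satisfy, for all t ≥ 0: V'(t) = −κ·(V(t) − V*) whenever V(t) ≤ V*, and V'(t) = −(1 − exp(−(V(t) − V*)))·q(t) whenever V(t) > V*. Then V(t) → V* as t → ∞ (asymptotic stability of the volume setpoint when the outgoing flow is strictly positive). -/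
open Filter

/-- Proposition 2 (asymptotic stability part): with outgoing flow uniformly
bounded below by `c > 0`, the storage volume converges to its setpoint. -/
theorem storage_volume_asymptotically_stable
    (Vstar κ c : ℝ) (hκ : 0 < κ) (hc : 0 < c)
    (q : ℝ → ℝ) (hqcont : ContinuousOn q (Set.Ici (0:ℝ)))
    (hq : ∀ t ≥ (0:ℝ), c ≤ q t)
    (V : ℝ → ℝ)
    (hdiff : ∀ t ≥ (0:ℝ), DifferentiableAt ℝ V t)
    (hode1 : ∀ t ≥ (0:ℝ), V t ≤ Vstar → deriv V t = -κ * (V t - Vstar))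
    (hode2 : ∀ t ≥ (0:ℝ), Vstar < V t →
      deriv V t = -(1 - Real.exp (-(V t - Vstar))) * q t) :
    Tendsto V atTop (nhds Vstar) := by
  have hW : ∀ t ≥ (0:ℝ), HasDerivAt (fun s => (V s - Vstar) ^ 2)
      (2 * (V t - Vstar) * deriv V t) t := by
    intro t ht
    have h := (((hdiff t ht).hasDerivAt.sub_const Vstar).pow 2)
    have e : 2 * (V t - Vstar) * deriv V t
        = ((2 : ℕ) : ℝ) * (V t - Vstar) ^ (2 - 1) * deriv V t := by norm_num
    rw [e]
    exact h
  have hcont : ContinuousOn (fun s => (V s - Vstar) ^ 2) (Set.Ici (0:ℝ)) :=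
    fun t ht => (hW t ht).continuousAt.continuousWithinAt
  have hdW : DifferentiableOn ℝ (fun s => (V s - Vstar) ^ 2) (interior (Set.Ici (0:ℝ))) :=
    fun t ht => (hW t (interior_subset ht)).differentiableAt.differentiableWithinAt
  have hanti : AntitoneOn (fun s => (V s - Vstar) ^ 2) (Set.Ici (0:ℝ)) := by
    apply antitoneOn_of_deriv_nonpos (convex_Ici 0) hcont hdW
    intro t ht
    have ht0 : (0:ℝ) ≤ t := interior_subset ht
    rw [(hW t ht0).deriv]
    rcases le_or_gt (V t) Vstar with h | h
    · rw [hode1 t ht0 h]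
      nlinarith [mul_nonneg hκ.le (sq_nonneg (V t - Vstar))]
    · rw [hode2 t ht0 h]
      have h1 : Real.exp (-(V t - Vstar)) ≤ 1 := Real.exp_le_one_iff.mpr (by linarith)
      have h2 : 0 ≤ q t := hc.le.trans (hq t ht0)
      have h3 : 0 ≤ (V t - Vstar) * ((1 - Real.exp (-(V t - Vstar))) * q t) :=
        mul_nonneg (by linarith) (mul_nonneg (by linarith) h2)
      linarith
  rw [Metric.tendsto_atTop]
  intro ε hε
  have hex : ∃ T ≥ (0:ℝ), |V T - Vstar| < ε := by
    by_contra! hcon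
    have he : 0 < 1 - Real.exp (-ε) := by
      have : Real.exp (-ε) < 1 := Real.exp_lt_one_iff.mpr (by linarith)
      linarith
    obtain ⟨δ, hδ, hδ1, hδ2⟩ : ∃ δ > 0, δ ≤ 2 * (κ * ε ^ 2) ∧
        δ ≤ 2 * (ε * ((1 - Real.exp (-ε)) * c)) :=
      ⟨min _ _, lt_min (by positivity) (by positivity), min_le_left _ _, min_le_right _ _⟩
    have hlin : ∀ t ≥ (0:ℝ), (V t - Vstar) ^ 2 - (V 0 - Vstar) ^ 2 ≤ (-δ) * (t - 0) := by
      intro t ht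
      refine (convex_Ici (0:ℝ)).image_sub_le_mul_sub_of_deriv_le hcont hdW ?_
        0 Set.self_mem_Ici t ht ht
      intro t ht
      have ht0 : (0:ℝ) ≤ t := interior_subset ht
      rw [(hW t ht0).deriv]
      have hab := hcon t ht0
      rcases le_or_gt (V t) Vstar with h | h
      · rw [hode1 t ht0 h]
        have h1 : ε ^ 2 ≤ (V t - Vstar) ^ 2 := by
          rw [← sq_abs (V t - Vstar)]
          gcongr
        nlinarith [mul_le_mul_of_nonneg_left h1 hκ.le]
      · rw [hode2 t ht0 h]
        rw [abs_of_pos (by linarith)] at hab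
        have h1 : Real.exp (-(V t - Vstar)) ≤ Real.exp (-ε) :=
          Real.exp_le_exp.mpr (by linarith)
        have h3 : ε * ((1 - Real.exp (-ε)) * c) ≤
            (V t - Vstar) * ((1 - Real.exp (-(V t - Vstar))) * q t) := by
          apply mul_le_mul hab _ (by positivity) (by linarith)
          exact mul_le_mul (by linarith) (hq t ht0) hc.le (by linarith)
        linarith
    have h0 : 0 ≤ (V 0 - Vstar) ^ 2 := sq_nonneg _
    have hT := hlin (((V 0 - Vstar) ^ 2 + 1) / δ) (by positivity)
    have h5 : (-δ) * (((V 0 - Vstar) ^ 2 + 1) / δ - 0) = -((V 0 - Vstar) ^ 2 + 1) := by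
      field_simp
      ring
    rw [h5] at hT
    nlinarith [sq_nonneg (V (((V 0 - Vstar) ^ 2 + 1) / δ) - Vstar)]
  obtain ⟨T, hT0, hT⟩ := hex
  refine ⟨T, fun t ht => ?_⟩
  rw [Real.dist_eq]
  have h := hanti (Set.mem_Ici.mpr hT0) (Set.mem_Ici.mpr (le_trans hT0 ht)) ht
  exact (sq_le_sq.mp h).trans_lt hT
end

section
/- Let T* be a real constant and φ > 0. Let T_p : [0,∞) → ℝ satisfy |T_p(t) − T*| ≤ φ for all t ≥ 0, let q : [0,∞) → ℝ satisfy q(t) ≥ 0 for all t ≥ 0, and let V : [0,∞) → ℝ satisfy V(t) > 0 for all t ≥ 0. Let T_sh : [0,∞) → ℝ be differentiable with V(t) · T_sh'(t) = q(t) · (T_p(t) − T_sh(t)) for all t ≥ 0. If |T_sh(0) − T*| ≤ φ, then |T_sh(t) − T*| ≤ φ for all t ≥ 0. -/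
theorem fence_aux (f : ℝ → ℝ) (c : ℝ) (hd : ∀ t ≥ (0:ℝ), DifferentiableAt ℝ f t)
    (h0 : f 0 ≤ c) (h : ∀ t ≥ (0:ℝ), c < f t → deriv f t ≤ 0) :
    ∀ t ≥ (0:ℝ), f t ≤ c := by
  intro t ht
  have key : ∀ r > (0:ℝ), f t ≤ c + r * (1 + t) := by
    intro r hr
    refine image_le_of_deriv_right_lt_deriv_boundary (f := f) (f' := deriv f) (a := 0) (b := t)
      (B := fun x => c + r * (1 + x)) (B' := fun _ => r)
      (fun x hx => (hd x hx.1).continuousAt.continuousWithinAt)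
      (fun x hx => (hd x hx.1).hasDerivAt.hasDerivWithinAt) ?_ ?_ ?_ ⟨ht, le_refl t⟩
    · skip
      linarith
    · intro x
      simpa using (((hasDerivAt_id x).const_add 1).const_mul r).const_add c
    · intro x hx he
      have hp : 0 < r * (1 + x) := mul_pos hr (by linarith [hx.1])
      have := h x hx.1 (by linarith)
      linarith
  apply le_of_forall_pos_le_add
  intro e he
  have h1 : (0:ℝ) < 1 + t := by linarith [show (0:ℝ) ≤ t from ht]
  have := key (e / (1 + t)) (div_pos he h1)
  rwa [div_mul_cancel₀ _ h1.ne'] at this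

/-- Proposition 3, claim (I): invariance of the boundary layer
`|T_sh − T*| ≤ φ` for the storage-tank hot-layer temperature. -/
theorem hot_storage_temperature_invariance
    (Tstar φ : ℝ) (hφ : 0 < φ)
    (Tp : ℝ → ℝ) (hTp : ∀ t ≥ (0:ℝ), |Tp t - Tstar| ≤ φ)
    (q : ℝ → ℝ) (hq : ∀ t ≥ (0:ℝ), 0 ≤ q t)
    (V : ℝ → ℝ) (hV : ∀ t ≥ (0:ℝ), 0 < V t)
    (Tsh : ℝ → ℝ)
    (hdiff : ∀ t ≥ (0:ℝ), DifferentiableAt ℝ Tsh t)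
    (hode : ∀ t ≥ (0:ℝ), V t * deriv Tsh t = q t * (Tp t - Tsh t))
    (h0 : |Tsh 0 - Tstar| ≤ φ) :
    ∀ t ≥ (0:ℝ), |Tsh t - Tstar| ≤ φ := by
  intro t ht
  have h0' := abs_le.mp h0
  rw [abs_le]
  constructor
  · have := fence_aux (fun x => -Tsh x) (φ - Tstar) (fun t ht => (hdiff t ht).neg)
      (by linarith) (by
        intro s hs hlt
        have hb := abs_le.mp (hTp s hs)
        have e := hode s hs
        have hn : 0 ≤ q s * (Tp s - Tsh s) := mul_nonneg (hq s hs) (by linarith)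
        rw [← e] at hn
        have := nonneg_of_mul_nonneg_right hn (hV s hs)
        rw [(hdiff s hs).hasDerivAt.fun_neg.deriv]
        linarith) t ht
    linarith
  · have := fence_aux Tsh (φ + Tstar) hdiff (by linarith) (by
        intro s hs hlt
        have hb := abs_le.mp (hTp s hs)
        have e := hode s hs
        have hn : q s * (Tp s - Tsh s) ≤ 0 :=
          mul_nonpos_of_nonneg_of_nonpos (hq s hs) (by linarith)
        rw [← e] at hn
        exact nonpos_of_mul_nonpos_right hn (hV s hs)) t ht
    linarith
end

section
/- Let T* be a real constant and c > 0, V_max > 0 constants. Let q : [0,∞) → ℝ be continuous with q(t) ≥ c for all t ≥ 0, let V : [0,∞) → ℝ be continuous with 0 < V(t) ≤ V_max for all t ≥ 0, and let T_p : [0,∞) → ℝ be continuous with T_p(t) → T* as t → ∞. If T_sh : [0,∞) → ℝ is differentiable and satisfies V(t) · T_sh'(t) = q(t) · (T_p(t) − T_sh(t)) for all t ≥ 0, then T_sh(t) → T* as t → ∞. -/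
open Filter

lemma hot_upper (Tstar c Vmax : ℝ) (hc : 0 < c) (hVmax : 0 < Vmax)
    (q V Tp f : ℝ → ℝ) (hq : ∀ t ≥ (0:ℝ), c ≤ q t)
    (hV : ∀ t ≥ (0:ℝ), 0 < V t ∧ V t ≤ Vmax)
    (hTp : Tendsto Tp atTop (nhds Tstar))
    (hdiff : ∀ t ≥ (0:ℝ), DifferentiableAt ℝ f t)
    (hode : ∀ t ≥ (0:ℝ), V t * deriv f t = q t * (Tp t - f t))
    (u : ℝ) (hu : Tstar < u) : ∀ᶠ t in atTop, f t < u := by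
  obtain ⟨e, he, rfl⟩ : ∃ e, 0 < e ∧ u = Tstar + 3 * e :=
    ⟨(u - Tstar) / 3, by linarith, by ring⟩
  obtain ⟨t1, ht1⟩ := eventually_atTop.1 (hTp.eventually_lt_const (show Tstar < Tstar + e by linarith))
  set s := max t1 0 with hs
  have hs0 : 0 ≤ s := le_max_right _ _
  have hs1 : t1 ≤ s := le_max_left _ _
  set k := c / Vmax with hk
  have hkpos : 0 < k := div_pos hc hVmax
  set D := |f s - Tstar| with hD
  have hD0 : 0 ≤ D := abs_nonneg _
  have key : ∀ t ≥ s, f t ≤ Tstar + 2 * e + D * Real.exp (-k * (t - s)) := by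
    intro t ht
    have hB : ∀ x : ℝ, HasDerivAt (fun t => Tstar + 2 * e + D * Real.exp (-k * (t - s)))
        (D * (Real.exp (-k * (x - s)) * (-k * 1))) x := by
      intro x
      exact ((((hasDerivAt_id x).sub_const s).const_mul (-k)).exp.const_mul D).const_add _
    refine image_le_of_deriv_right_lt_deriv_boundary (f := f) (f' := deriv f) (a := s) (b := t)
      (fun x hx => (hdiff x (hs0.trans hx.1)).continuousAt.continuousWithinAt)
      (fun x hx => (hdiff x (hs0.trans hx.1)).hasDerivAt.hasDerivWithinAt) ?_ hB ?_ ⟨ht, le_rfl⟩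
    · have := le_abs_self (f s - Tstar)
      simp only [sub_self, mul_zero, Real.exp_zero]
      linarith
    · intro x hx hfx
      have hx0 : 0 ≤ x := hs0.trans hx.1
      have h1 := ht1 x (hs1.trans hx.1)
      obtain ⟨hv, hv'⟩ := hV x hx0
      have h2 := hq x hx0
      have h3 := hode x hx0
      have hE : 0 ≤ D * Real.exp (-k * (x - s)) := by positivity
      set E := D * Real.exp (-k * (x - s)) with hEd
      have hkV : k * V x ≤ q x := by
        calc k * V x ≤ k * Vmax := by gcongr
          _ = c := by rw [hk]; field_simp
          _ ≤ q x := h2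
      have hgoal : D * (Real.exp (-k * (x - s)) * (-k * 1)) = -k * E := by rw [hEd]; ring
      rw [hgoal]
      have hqx : 0 < q x := hc.trans_le h2
      refine lt_of_mul_lt_mul_left (a := V x) ?_ hv.le
      rw [h3, hfx]
      have h4 : q x * (Tp x - (Tstar + 2 * e + E)) < q x * (-E) :=
        mul_lt_mul_of_pos_left (by linarith) hqx
      have h5 : k * V x * E ≤ q x * E := mul_le_mul_of_nonneg_right hkV hE
      linarith
  have hlim : Tendsto (fun t => Tstar + 2 * e + D * Real.exp (-k * (t - s))) atTop
      (nhds (Tstar + 2 * e + D * 0)) := by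
    refine ((Real.tendsto_exp_atBot.comp ?_).const_mul D).const_add _
    exact (tendsto_atTop_add_const_right atTop (-s) tendsto_id).const_mul_atTop_of_neg
      (neg_lt_zero.2 hkpos)
  filter_upwards [hlim.eventually_lt_const (show _ < Tstar + 3 * e by linarith),
    eventually_ge_atTop s] with t h1 h2
  exact (key t h2).trans_lt h1

/-- Proposition 3, claim (II): if the producer flow is bounded below by `c > 0`,
the hot-layer volume is positive and bounded, and the producer temperature
converges to `T*`, then the storage-tank hot-layer temperature converges to `T*`. -/
theorem hot_storage_temperature_convergence
    (Tstar c Vmax : ℝ) (hc : 0 < c) (hVmax : 0 < Vmax)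
    (q : ℝ → ℝ) (hqcont : ContinuousOn q (Set.Ici (0:ℝ)))
    (hq : ∀ t ≥ (0:ℝ), c ≤ q t)
    (V : ℝ → ℝ) (hVcont : ContinuousOn V (Set.Ici (0:ℝ)))
    (hV : ∀ t ≥ (0:ℝ), 0 < V t ∧ V t ≤ Vmax)
    (Tp : ℝ → ℝ) (hTpcont : ContinuousOn Tp (Set.Ici (0:ℝ)))
    (hTp : Tendsto Tp atTop (nhds Tstar))
    (Tsh : ℝ → ℝ)
    (hdiff : ∀ t ≥ (0:ℝ), DifferentiableAt ℝ Tsh t)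
    (hode : ∀ t ≥ (0:ℝ), V t * deriv Tsh t = q t * (Tp t - Tsh t)) :
    Tendsto Tsh atTop (nhds Tstar) := by
  refine tendsto_order.2 ⟨fun l hl => ?_, fun u hu =>
    hot_upper Tstar c Vmax hc hVmax q V Tp Tsh hq hV hTp hdiff hode u hu⟩
  have h := hot_upper (-Tstar) c Vmax hc hVmax q V (fun t => -Tp t) (fun t => -Tsh t) hq hV
    hTp.neg (fun t ht => (hdiff t ht).neg)
    (fun t ht => by
      have h1 := hode t ht
      have h2 : deriv (fun t => -Tsh t) t = -deriv Tsh t := (hdiff t ht).hasDerivAt.neg.deriv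
      rw [h2]
      linarith) (-l) (neg_lt_neg hl)
  filter_upwards [h] with t ht
  linarith
end

section
/- Let E, N and K be finite sets, σ : E → N (source node of each edge), τ : E → N (target node of each edge) and ν : K → N (injection node of each tank) be maps, and let V_e > 0 (e ∈ E) and V_n > 0 (n ∈ N) be constants. Let q_e : [0,∞) → ℝ (e ∈ E) and r_k : [0,∞) → ℝ (k ∈ K) satisfy q_e(t) ≥ 0 and r_k(t) ≥ 0 for all t ≥ 0, and let S_k : [0,∞) → ℝ (k ∈ K) satisfy S_k(t) ≥ θ for all t ≥ 0, where θ is a real constant. Suppose T_e : [0,∞) → ℝ (e ∈ E) and T_n : [0,∞) → ℝ (n ∈ N) are differentiable and satisfy, for all t ≥ 0: V_e · T_e'(t) = q_e(t) · (T_{σ(e)}(t) − T_e(t)) for every e ∈ E, and V_n · T_n'(t) = Σ_{e ∈ E, τ(e) = n} q_e(t) · (T_e(t) − T_n(t)) + Σ_{k ∈ K, ν(k) = n} r_k(t) · (S_k(t) − T_n(t)) for every n ∈ N. If T_e(0) ≥ θ for all e ∈ E and T_n(0) ≥ θ for all n ∈ N, then T_e(t) ≥ θ and T_n(t) ≥ θ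 for all t ≥ 0. -/
/-- Minimum principle for a finite family of differentiable functions. -/
theorem finite_family_min_principle {ι : Type*} [Finite ι] (θ : ℝ) (f : ι → ℝ → ℝ)
    (hd : ∀ i, ∀ t ≥ (0:ℝ), DifferentiableAt ℝ (f i) t)
    (h0 : ∀ i, θ ≤ f i 0)
    (hmin : ∀ i, ∀ t ≥ (0:ℝ), (∀ j, f i t ≤ f j t) → f i t < θ → 0 ≤ deriv (f i) t) :
    ∀ t ≥ (0:ℝ), ∀ i, θ ≤ f i t := by
  intro t1 ht1 i0
  have key : ∀ ε > (0:ℝ), 0 < f i0 t1 - θ + ε * (1 + t1) := by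
    intro ε hε
    by_contra hcon
    push Not at hcon
    let A : Set ℝ := ⋃ i, (Set.Icc 0 t1 ∩ (fun t => f i t - θ + ε * (1 + t)) ⁻¹' Set.Iic 0)
    have hAc : IsCompact A := by
      apply isCompact_iUnion
      intro i
      have hc : ContinuousOn (fun t => f i t - θ + ε * (1 + t)) (Set.Icc 0 t1) := by
        have h1 : ContinuousOn (f i) (Set.Icc 0 t1) := fun x hx =>
          (hd i x hx.1).continuousAt.continuousWithinAt
        fun_prop
      exact isCompact_Icc.of_isClosed_subset
        (hc.preimage_isClosed_of_isClosed isClosed_Icc isClosed_Iic) Set.inter_subset_left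
    have hAn : A.Nonempty :=
      ⟨t1, Set.mem_iUnion.2 ⟨i0, ⟨ht1, le_rfl⟩, hcon⟩⟩
    obtain ⟨s, hsA, hsl⟩ := hAc.exists_isLeast hAn
    obtain ⟨i1, ⟨hs0, hs1⟩, hi1⟩ := Set.mem_iUnion.1 hsA
    simp only [Set.mem_preimage, Set.mem_Iic] at hi1
    have : Nonempty ι := ⟨i0⟩
    obtain ⟨i, hi⟩ := Finite.exists_min (fun j => f j s)
    have hpos : 0 < s := by
      rcases hs0.eq_or_lt with h | h
      · subst h
        have := h0 i1
        linarith
      · exact h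
    have hui : f i s - θ + ε * (1 + s) ≤ 0 := by linarith [hi i1]
    have hlt : f i s < θ := by
      have : 0 < ε * (1 + s) := by positivity
      linarith
    have hder := hmin i s hs0 hi hlt
    have hslope := (hd i s hs0).hasDerivAt.tendsto_slope
    have hev : ∀ᶠ x in nhdsWithin s (Set.Iio s), -ε < slope (f i) s x := by
      have h1 : ∀ᶠ x in nhdsWithin s {s}ᶜ, -ε < slope (f i) s x :=
        hslope.eventually (lt_mem_nhds (by linarith))
      exact h1.filter_mono (nhdsWithin_mono _ (fun x hx => ne_of_lt hx))
    obtain ⟨x, hx, hx0, hxs⟩ := (hev.and (Ioo_mem_nhdsLT hpos)).exists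
    rw [slope_def_field, lt_div_iff_of_neg (by linarith)] at hx
    have hxA : x ∈ A := Set.mem_iUnion.2 ⟨i, ⟨hx0.le, by linarith⟩, by
      simp only [Set.mem_preimage, Set.mem_Iic]
      nlinarith⟩
    linarith [hsl hxA]
  by_contra hlt
  push Not at hlt
  have h1 : 0 < 1 + t1 := by linarith
  have h2 := key ((θ - f i0 t1) / (1 + t1)) (div_pos (by linarith) h1)
  rw [div_mul_cancel₀ _ h1.ne'] at h2
  linarith

/-- Proposition 4: lower-bound invariance of the supply-layer temperatures of the
distribution network, modeled as a finite directed graph with edge (pipe)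
dynamics `V_e T_e' = q_e (T_{σ(e)} − T_e)` and node (junction) dynamics driven
by incoming edges and tank injections with temperatures `S_k ≥ θ`. -/
theorem supply_layer_lower_bound_invariance
    {E N K : Type*} [Fintype E] [Fintype K] [DecidableEq N]
    (σ τ : E → N) (ν : K → N)
    (Ve : E → ℝ) (hVe : ∀ e, 0 < Ve e)
    (Vn : N → ℝ) (hVn : ∀ n, 0 < Vn n)
    (q : E → ℝ → ℝ) (hq : ∀ e, ∀ t ≥ (0:ℝ), 0 ≤ q e t)
    (r : K → ℝ → ℝ) (hr : ∀ k, ∀ t ≥ (0:ℝ), 0 ≤ r k t)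
    (θ : ℝ) (S : K → ℝ → ℝ) (hS : ∀ k, ∀ t ≥ (0:ℝ), θ ≤ S k t)
    (Te : E → ℝ → ℝ) (Tn : N → ℝ → ℝ)
    (hTeDiff : ∀ e, ∀ t ≥ (0:ℝ), DifferentiableAt ℝ (Te e) t)
    (hTnDiff : ∀ n, ∀ t ≥ (0:ℝ), DifferentiableAt ℝ (Tn n) t)
    (hodeE : ∀ e, ∀ t ≥ (0:ℝ),
      Ve e * deriv (Te e) t = q e t * (Tn (σ e) t - Te e t))
    (hodeN : ∀ n, ∀ t ≥ (0:ℝ),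
      Vn n * deriv (Tn n) t
        = (∑ e ∈ Finset.univ.filter (fun e => τ e = n), q e t * (Te e t - Tn n t))
          + (∑ k ∈ Finset.univ.filter (fun k => ν k = n), r k t * (S k t - Tn n t)))
    (h0E : ∀ e, θ ≤ Te e 0) (h0N : ∀ n, θ ≤ Tn n 0) :
    ∀ t ≥ (0:ℝ), (∀ e, θ ≤ Te e t) ∧ (∀ n, θ ≤ Tn n t) := by
  have main : ∀ n0 : N, ∀ t ≥ (0:ℝ), ∀ i : E ⊕ Option E,
      θ ≤ (Sum.elim Te (fun o => Tn (o.elim n0 σ)) : E ⊕ Option E → ℝ → ℝ) i t := by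
    intro n0
    apply finite_family_min_principle
    · rintro (e | o) t ht
      · exact hTeDiff e t ht
      · exact hTnDiff _ t ht
    · rintro (e | o)
      · exact h0E e
      · exact h0N _
    · rintro (e | o) t ht hm hlt
      · have h1 : Te e t ≤ Tn (σ e) t := hm (Sum.inr (some e))
        have h2 : 0 ≤ Ve e * deriv (Te e) t := by
          rw [hodeE e t ht]
          exact mul_nonneg (hq e t ht) (by linarith)
        exact nonneg_of_mul_nonneg_right h2 (hVe e)
      · simp only [Sum.elim_inr] at hm hlt ⊢
        generalize o.elim n0 σ = n at hm hlt ⊢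
        have h2 : 0 ≤ Vn n * deriv (Tn n) t := by
          rw [hodeN n t ht]
          refine add_nonneg (Finset.sum_nonneg fun e _ => ?_) (Finset.sum_nonneg fun k _ => ?_)
          · have h1 : Tn n t ≤ Te e t := hm (Sum.inl e)
            exact mul_nonneg (hq e t ht) (by linarith)
          · exact mul_nonneg (hr k t ht) (by linarith [hS k t ht])
        exact nonneg_of_mul_nonneg_right h2 (hVn n)
  intro t ht
  exact ⟨fun e => main (σ e) t ht (Sum.inl e), fun n => main n t ht (Sum.inr none)⟩
end

section
/- Let E, N and K be finite sets, σ : E → N, τ : E → N and ν : K → N be maps, and let V_e > 0 (e ∈ E) and V_n > 0 (n ∈ N) be constants. Let q_e : [0,∞) → ℝ (e ∈ E) and r_k : [0,∞) → ℝ (k ∈ K) satisfy q_e(t) ≥ 0 and r_k(t) ≥ 0 for all t ≥ 0, and let S_k : [0,∞) → ℝ (k ∈ K) satisfy θ₁ ≤ S_k(t) ≤ θ₂ for all t ≥ 0, where θ₁ ≤ θ₂ are real constants. Suppose T_e : [0,∞) → ℝ (e ∈ E) and T_n : [0,∞) → ℝ (n ∈ N) are differentiable and satisfy, for all t ≥ 0: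 V_e · T_e'(t) = q_e(t) · (T_{σ(e)}(t) − T_e(t)) for every e ∈ E, and V_n · T_n'(t) = Σ_{e ∈ E, τ(e) = n} q_e(t) · (T_e(t) − T_n(t)) + Σ_{k ∈ K, ν(k) = n} r_k(t) · (S_k(t) − T_n(t)) for every n ∈ N. If θ₁ ≤ T_e(0) ≤ θ₂ for all e ∈ E and θ₁ ≤ T_n(0) ≤ θ₂ for all n ∈ N, then θ₁ ≤ T_e(t) ≤ θ₂ and θ₁ ≤ T_n(t) ≤ θ₂ for all t ≥ 0; in particular all network temperatures remain bounded. -/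
open Filter Topology in
lemma deriv_nonneg_of_left_max (g : ℝ → ℝ) (s g' : ℝ) (hs : 0 < s) (hg : HasDerivAt g g' s)
    (hmax : ∀ x, 0 ≤ x → x ≤ s → g x ≤ g s) : 0 ≤ g' := by
  have h1 : HasDerivWithinAt g g' (Set.Iio s) s := hg.hasDerivWithinAt
  rw [hasDerivWithinAt_iff_tendsto_slope' (by simp)] at h1
  refine ge_of_tendsto h1 ?_
  have h2 : ∀ᶠ x in 𝓝[<] s, 0 < x := nhdsWithin_le_nhds (lt_mem_nhds hs)
  filter_upwards [h2, self_mem_nhdsWithin] with x hx hxs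
  have hxs' : x < s := hxs
  rw [slope_def_field]
  exact div_nonneg_of_nonpos (by linarith [hmax x hx.le hxs'.le]) (by linarith)

lemma finite_max_principle {ι : Type*} [Finite ι] (f : ι → ℝ → ℝ) (θ : ℝ)
    (hd : ∀ i, ∀ t ≥ (0:ℝ), DifferentiableAt ℝ (f i) t)
    (h0 : ∀ i, f i 0 ≤ θ)
    (hm : ∀ i, ∀ t ≥ (0:ℝ), (∀ j, f j t ≤ f i t) → θ ≤ f i t → deriv (f i) t ≤ 0) :
    ∀ i, ∀ t ≥ (0:ℝ), f i t ≤ θ := by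
  intro i₀ t ht
  haveI : Nonempty ι := ⟨i₀⟩
  have key : ∀ ε > (0:ℝ), f i₀ t ≤ θ + ε * t := by
    intro ε hε
    have hex : ∀ i, ∃ s ∈ Set.Icc 0 t, ∀ x ∈ Set.Icc 0 t, f i x - ε * x ≤ f i s - ε * s := by
      intro i
      have hc : ContinuousOn (fun x => f i x - ε * x) (Set.Icc 0 t) := by
        intro x hx
        exact ((hd i x hx.1).continuousAt.sub (by fun_prop)).continuousWithinAt
      obtain ⟨s, hs, h⟩ := isCompact_Icc.exists_isMaxOn (Set.nonempty_Icc.2 ht) hc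
      exact ⟨s, hs, fun x hx => h hx⟩
    choose s hs hsm using hex
    obtain ⟨i, hi⟩ := Finite.exists_max (fun i => f i (s i) - ε * s i)
    have hall : ∀ j, ∀ x ∈ Set.Icc 0 t, f j x - ε * x ≤ f i (s i) - ε * s i :=
      fun j x hx => (hsm j x hx).trans (hi j)
    have hfin := hall i₀ t ⟨ht, le_rfl⟩
    have hle : f i (s i) ≤ θ := by
      rcases (hs i).1.eq_or_lt with h | h
      · rw [← h]; exact h0 i
      by_contra! hlt
      have hd1 := hm i (s i) h.le (fun j => by linarith [hall j (s i) (hs i)]) hlt.le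
      have hder : HasDerivAt (fun x => f i x - ε * x) (deriv (f i) (s i) - ε * 1) (s i) :=
        (hd i _ h.le).hasDerivAt.sub ((hasDerivAt_id _).const_mul ε)
      have := deriv_nonneg_of_left_max _ _ _ h hder
        (fun x hx hxs => hall i x ⟨hx, hxs.trans (hs i).2⟩)
      linarith
    have : 0 ≤ ε * s i := mul_nonneg hε.le (hs i).1
    linarith
  refine le_of_forall_pos_le_add fun δ hδ => ?_
  have h1 := key (δ / (t + 1)) (by positivity)
  have h2 : δ / (t + 1) * t ≤ δ := by
    rw [div_mul_eq_mul_div, div_le_iff₀ (by positivity)]; nlinarith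
  linarith

lemma network_upper {E N K : Type*} [Fintype E] [Fintype K] [DecidableEq N]
    (σ τ : E → N) (ν : K → N)
    (Ve : E → ℝ) (hVe : ∀ e, 0 < Ve e)
    (Vn : N → ℝ) (hVn : ∀ n, 0 < Vn n)
    (q : E → ℝ → ℝ) (hq : ∀ e, ∀ t ≥ (0:ℝ), 0 ≤ q e t)
    (r : K → ℝ → ℝ) (hr : ∀ k, ∀ t ≥ (0:ℝ), 0 ≤ r k t)
    (θ : ℝ)
    (S : K → ℝ → ℝ) (hS : ∀ k, ∀ t ≥ (0:ℝ), S k t ≤ θ)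
    (Te : E → ℝ → ℝ) (Tn : N → ℝ → ℝ)
    (hTeDiff : ∀ e, ∀ t ≥ (0:ℝ), DifferentiableAt ℝ (Te e) t)
    (hTnDiff : ∀ n, ∀ t ≥ (0:ℝ), DifferentiableAt ℝ (Tn n) t)
    (hodeE : ∀ e, ∀ t ≥ (0:ℝ),
      Ve e * deriv (Te e) t = q e t * (Tn (σ e) t - Te e t))
    (hodeN : ∀ n, ∀ t ≥ (0:ℝ),
      Vn n * deriv (Tn n) t
        = (∑ e ∈ Finset.univ.filter (fun e => τ e = n), q e t * (Te e t - Tn n t))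
          + (∑ k ∈ Finset.univ.filter (fun k => ν k = n), r k t * (S k t - Tn n t)))
    (h0E : ∀ e, Te e 0 ≤ θ) (h0N : ∀ n, Tn n 0 ≤ θ) (t : ℝ) (ht : 0 ≤ t) :
    (∀ e, Te e t ≤ θ) ∧ (∀ n, Tn n t ≤ θ) := by
  -- finitely many relevant temperatures: all pipes, a family of nodes containing all sources
  have main : ∀ g : Option E → N, (∀ e, g (some e) = σ e) →
      ∀ i : E ⊕ Option E, Sum.elim Te (fun o => Tn (g o)) i t ≤ θ := by
    intro g hg i
    refine finite_max_principle (Sum.elim Te (fun o => Tn (g o))) θ ?_ ?_ ?_ i t ht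
    · rintro (e | o) s hs
      · exact hTeDiff e s hs
      · exact hTnDiff _ s hs
    · rintro (e | o)
      · exact h0E e
      · exact h0N _
    · rintro (e | o) s hs hmax hθ
      · have h1 := hmax (Sum.inr (some e))
        simp only [Sum.elim_inl, Sum.elim_inr, hg] at h1 hθ ⊢
        have h2 : Ve e * deriv (Te e) s ≤ 0 := by
          rw [hodeE e s hs]
          exact mul_nonpos_of_nonneg_of_nonpos (hq e s hs) (by linarith)
        exact nonpos_of_mul_nonpos_right h2 (hVe e)
      · have h1 := fun e => hmax (Sum.inl e)
        simp only [Sum.elim_inl, Sum.elim_inr] at h1 hθ ⊢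
        have h2 : Vn (g o) * deriv (Tn (g o)) s ≤ 0 := by
          rw [hodeN (g o) s hs]
          refine add_nonpos (Finset.sum_nonpos fun e _ => ?_) (Finset.sum_nonpos fun k _ => ?_)
          · exact mul_nonpos_of_nonneg_of_nonpos (hq e s hs) (by linarith [h1 e])
          · exact mul_nonpos_of_nonneg_of_nonpos (hr k s hs) (by linarith [hS k s hs])
        exact nonpos_of_mul_nonpos_right h2 (hVn _)
  constructor
  · intro e
    exact main (fun o => o.elim (σ e) σ) (fun _ => rfl) (Sum.inl e)
  · intro n
    exact main (fun o => o.elim n σ) (fun _ => rfl) (Sum.inr none)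


/-- Two-sided invariance (boundedness) of the distribution-network layer
temperatures: if all injection temperatures `S_k` stay in `[θ₁, θ₂]` and all
initial temperatures lie in `[θ₁, θ₂]`, then all edge and node temperatures
remain in `[θ₁, θ₂]` for all time. -/
theorem network_layer_two_sided_invariance
    {E N K : Type*} [Fintype E] [Fintype K] [DecidableEq N]
    (σ τ : E → N) (ν : K → N)
    (Ve : E → ℝ) (hVe : ∀ e, 0 < Ve e)
    (Vn : N → ℝ) (hVn : ∀ n, 0 < Vn n)
    (q : E → ℝ → ℝ) (hq : ∀ e, ∀ t ≥ (0:ℝ), 0 ≤ q e t)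
    (r : K → ℝ → ℝ) (hr : ∀ k, ∀ t ≥ (0:ℝ), 0 ≤ r k t)
    (θ₁ θ₂ : ℝ) (hθ : θ₁ ≤ θ₂)
    (S : K → ℝ → ℝ) (hS : ∀ k, ∀ t ≥ (0:ℝ), θ₁ ≤ S k t ∧ S k t ≤ θ₂)
    (Te : E → ℝ → ℝ) (Tn : N → ℝ → ℝ)
    (hTeDiff : ∀ e, ∀ t ≥ (0:ℝ), DifferentiableAt ℝ (Te e) t)
    (hTnDiff : ∀ n, ∀ t ≥ (0:ℝ), DifferentiableAt ℝ (Tn n) t)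
    (hodeE : ∀ e, ∀ t ≥ (0:ℝ),
      Ve e * deriv (Te e) t = q e t * (Tn (σ e) t - Te e t))
    (hodeN : ∀ n, ∀ t ≥ (0:ℝ),
      Vn n * deriv (Tn n) t
        = (∑ e ∈ Finset.univ.filter (fun e => τ e = n), q e t * (Te e t - Tn n t))
          + (∑ k ∈ Finset.univ.filter (fun k => ν k = n), r k t * (S k t - Tn n t)))
    (h0E : ∀ e, θ₁ ≤ Te e 0 ∧ Te e 0 ≤ θ₂)
    (h0N : ∀ n, θ₁ ≤ Tn n 0 ∧ Tn n 0 ≤ θ₂) :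
    ∀ t ≥ (0:ℝ),
      (∀ e, θ₁ ≤ Te e t ∧ Te e t ≤ θ₂) ∧ (∀ n, θ₁ ≤ Tn n t ∧ Tn n t ≤ θ₂) := by
  intro t ht
  have hu := network_upper σ τ ν Ve hVe Vn hVn q hq r hr θ₂ S (fun k s hs => (hS k s hs).2)
    Te Tn hTeDiff hTnDiff hodeE hodeN (fun e => (h0E e).2) (fun n => (h0N n).2) t ht
  have hl := network_upper σ τ ν Ve hVe Vn hVn q hq r hr (-θ₁) (fun k s => - S k s)
    (fun k s hs => neg_le_neg (hS k s hs).1)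
    (fun e s => - Te e s) (fun n s => - Tn n s)
    (fun e s hs => (hTeDiff e s hs).neg) (fun n s hs => (hTnDiff n s hs).neg)
    (fun e s hs => by
      rw [deriv.fun_neg]
      linear_combination - hodeE e s hs)
    (fun n s hs => by
      rw [deriv.fun_neg, mul_neg, hodeN n s hs, neg_add, ← Finset.sum_neg_distrib,
        ← Finset.sum_neg_distrib]
      congr 1 <;> exact Finset.sum_congr rfl fun _ _ => by ring)
    (fun e => neg_le_neg (h0E e).1) (fun n => neg_le_neg (h0N n).1) t ht
  exact ⟨fun e => ⟨neg_le_neg_iff.1 (hl.1 e), hu.1 e⟩,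
    fun n => ⟨neg_le_neg_iff.1 (hl.2 n), hu.2 n⟩⟩
end

section
/- Let V > 0, ε > 0, Z > 0, ω, T* and P be real constants with P ≥ 0 and ω ≥ 1/V + Z/(4·V²·ε). Let T_in : [0,∞) → ℝ satisfy T_in(t) − T* ≥ ε for all t ≥ 0, and let z : [0,∞) → ℝ satisfy z'(t) = −z(t) + P and 0 < z(t) ≤ Z for all t ≥ 0. Let T : [0,∞) → ℝ be differentiable with V · T'(t) = −((T(t) − T*)/(T_in(t) − T*))·z(t) + (z(t) − P) for all t ≥ 0. Then the function W(t) := (1/2)·( V·(T(t) − T*)² + 2·(T(t) − T*)·(z(t) − P) + ω·(z(t) − P)² ) is nonincreasing on [0,∞). -/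
/-- Lyapunov-decrease claim in the proof of Proposition 5: along the closed-loop
consumer dynamics, the quadratic form
`W(t) = (1/2)(V (T−T*)² + 2 (T−T*)(z−P) + ω (z−P)²)` is nonincreasing. -/
theorem consumer_lyapunov_nonincreasing
    (V ε Z ω Tstar P : ℝ)
    (hV : 0 < V) (hε : 0 < ε) (hZ : 0 < Z) (hP : 0 ≤ P)
    (hω : 1 / V + Z / (4 * V^2 * ε) ≤ ω)
    (Tin : ℝ → ℝ) (hTin : ∀ t ≥ (0:ℝ), ε ≤ Tin t - Tstar)
    (z : ℝ → ℝ)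
    (hz : ∀ t ≥ (0:ℝ), HasDerivAt z (-z t + P) t)
    (hzbnd : ∀ t ≥ (0:ℝ), 0 < z t ∧ z t ≤ Z)
    (T : ℝ → ℝ)
    (hdiff : ∀ t ≥ (0:ℝ), DifferentiableAt ℝ T t)
    (hode : ∀ t ≥ (0:ℝ),
      V * deriv T t = -((T t - Tstar) / (Tin t - Tstar)) * z t + (z t - P)) :
    AntitoneOn
      (fun t => (1/2) * (V * (T t - Tstar)^2
        + 2 * (T t - Tstar) * (z t - P) + ω * (z t - P)^2))
      (Set.Ici (0:ℝ)) := by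
  have hder : ∀ t ≥ (0:ℝ), HasDerivAt (fun t => (1/2) * (V * (T t - Tstar)^2
        + 2 * (T t - Tstar) * (z t - P) + ω * (z t - P)^2))
      (V * (T t - Tstar) * deriv T t + deriv T t * (z t - P)
        + (T t - Tstar) * (-z t + P) + ω * (z t - P) * (-z t + P)) t := by
    intro t ht
    have h1 := ((hdiff t ht).hasDerivAt).sub_const Tstar
    have h2 := (hz t ht).sub_const P
    have h := ((((h1.pow 2).const_mul V).add ((h1.const_mul 2).mul h2)).add
      ((h2.pow 2).const_mul ω)).const_mul (1/2)
    refine HasDerivAt.congr_deriv h ?_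
    norm_num
    ring
  refine antitoneOn_of_deriv_nonpos (convex_Ici 0)
    (fun t ht => (hder t ht).continuousAt.continuousWithinAt)
    (fun t ht => (hder t (interior_subset ht)).differentiableAt.differentiableWithinAt) ?_
  intro t ht
  have ht0 : t ≥ 0 := interior_subset ht
  rw [(hder t ht0).deriv]
  obtain ⟨hz0, hzZ⟩ := hzbnd t ht0
  have hT := hTin t ht0
  have ho := hode t ht0
  have hTpos : 0 < Tin t - Tstar := lt_of_lt_of_le hε hT
  obtain ⟨a, ha⟩ : ∃ a, a = z t / (Tin t - Tstar) := ⟨_, rfl⟩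
  have ha0 : 0 ≤ a := by rw [ha]; positivity
  have haZ : a ≤ Z / ε := by
    rw [ha]; exact div_le_div₀ hZ.le hzZ hε hT
  have ho' : V * deriv T t = -(a * (T t - Tstar)) + (z t - P) := by
    rw [ho, ha]; ring
  obtain ⟨k, hk⟩ : ∃ k, k = 1 / V := ⟨_, rfl⟩
  have hkV : k * V = 1 := by rw [hk]; field_simp
  have hD : deriv T t = k * (-(a * (T t - Tstar)) + (z t - P)) := by
    rw [← ho', ← mul_assoc, hkV, one_mul]
  have hw : k + k ^ 2 / 4 * (Z / ε) ≤ ω := by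
    refine le_trans (le_of_eq ?_) hω
    rw [hk]; field_simp
  have hw2 : k + k ^ 2 / 4 * a ≤ ω := by
    have := mul_le_mul_of_nonneg_left haZ (by positivity : 0 ≤ k ^ 2 / 4)
    linarith
  have e1 := mul_le_mul_of_nonneg_right hw2 (sq_nonneg (z t - P))
  have e2 := mul_nonneg ha0 (sq_nonneg ((T t - Tstar) + k / 2 * (z t - P)))
  have e3 : V * (T t - Tstar) * deriv T t
      = (T t - Tstar) * (-(a * (T t - Tstar)) + (z t - P)) := by
    rw [← ho']; ring
  rw [e3, hD]
  nlinarith [e1, e2]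
end

section
/- Let V*, C and κ > 0 be real constants and q : [0,∞) → ℝ a function with q(t) ≥ 0 for all t ≥ 0. Let V_sh : [0,∞) → ℝ be differentiable and satisfy, for all t ≥ 0: V_sh'(t) = −κ·(V_sh(t) − V*) whenever V_sh(t) ≤ V*, and V_sh'(t) = −(1 − exp(−(V_sh(t) − V*)))·q(t) whenever V_sh(t) > V*, and let V_sc : [0,∞) → ℝ satisfy V_sh(t) + V_sc(t) = C for all t ≥ 0. Then |V_sc(t) − (C − V*)| ≤ |V_sc(0) − (C − V*)| for all t ≥ 0; moreover, if q is continuous and q(t) ≥ c for all t ≥ 0 for some c > 0, then V_sc(t) → C − V* as t → ∞. -/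
open Filter

/-- Volume part of Proposition 7: since the tank is always full,
`V_sh + V_sc = C`; the cold-layer volume inherits Lyapunov stability at
`C − V*` and, when the outgoing flow is uniformly positive, converges to it. -/
theorem cold_storage_volume_stability
    (Vstar C κ : ℝ) (hκ : 0 < κ)
    (q : ℝ → ℝ) (hq : ∀ t ≥ (0:ℝ), 0 ≤ q t)
    (Vsh Vsc : ℝ → ℝ)
    (hdiff : ∀ t ≥ (0:ℝ), DifferentiableAt ℝ Vsh t)
    (hode1 : ∀ t ≥ (0:ℝ), Vsh t ≤ Vstar → deriv Vsh t = -κ * (Vsh t - Vstar))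
    (hode2 : ∀ t ≥ (0:ℝ), Vstar < Vsh t →
      deriv Vsh t = -(1 - Real.exp (-(Vsh t - Vstar))) * q t)
    (hfull : ∀ t ≥ (0:ℝ), Vsh t + Vsc t = C) :
    (∀ t ≥ (0:ℝ), |Vsc t - (C - Vstar)| ≤ |Vsc 0 - (C - Vstar)|) ∧
    (ContinuousOn q (Set.Ici (0:ℝ)) →
      (∃ c > (0:ℝ), ∀ t ≥ (0:ℝ), c ≤ q t) →
      Tendsto Vsc atTop (nhds (C - Vstar))) := by
  have hd : ∀ t ≥ (0:ℝ), HasDerivAt (fun s => (Vsh s - Vstar) ^ 2)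
      (2 * (Vsh t - Vstar) * deriv Vsh t) t := by
    intro t ht
    have h := ((hdiff t ht).hasDerivAt.sub_const Vstar).pow 2
    refine h.congr_deriv ?_
    norm_num
  have hcont : ContinuousOn (fun s => (Vsh s - Vstar) ^ 2) (Set.Ici (0:ℝ)) :=
    fun t ht => (hd t ht).continuousAt.continuousWithinAt
  have hdo : DifferentiableOn ℝ (fun s => (Vsh s - Vstar) ^ 2) (interior (Set.Ici (0:ℝ))) :=
    fun t ht => (hd t (interior_subset ht)).differentiableAt.differentiableWithinAt
  have hanti : AntitoneOn (fun s => (Vsh s - Vstar) ^ 2) (Set.Ici (0:ℝ)) := by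
    refine antitoneOn_of_deriv_nonpos (convex_Ici 0) hcont hdo ?_
    intro t ht
    have ht0 : t ≥ 0 := interior_subset ht
    rw [(hd t ht0).deriv]
    rcases le_or_gt (Vsh t) Vstar with h | h
    · rw [hode1 t ht0 h]
      nlinarith [mul_nonneg hκ.le (sq_nonneg (Vsh t - Vstar))]
    · rw [hode2 t ht0 h]
      have h1 : Real.exp (-(Vsh t - Vstar)) ≤ 1 := Real.exp_le_one_iff.2 (by linarith)
      have h2 : 0 ≤ (Vsh t - Vstar) * ((1 - Real.exp (-(Vsh t - Vstar))) * q t) :=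
        mul_nonneg (by linarith) (mul_nonneg (by linarith) (hq t ht0))
      nlinarith
  have hsc : ∀ t ≥ (0:ℝ), |Vsc t - (C - Vstar)| = |Vsh t - Vstar| := by
    intro t ht
    rw [← abs_neg]
    congr 1
    linarith [hfull t ht]
  have hmono : ∀ s ≥ (0:ℝ), ∀ t ≥ s, |Vsh t - Vstar| ≤ |Vsh s - Vstar| := by
    intro s hs t hst
    exact sq_le_sq.1 (hanti (Set.mem_Ici.2 hs) (Set.mem_Ici.2 (le_trans hs hst)) hst)
  refine ⟨fun t ht => ?_, ?_⟩
  · rw [hsc t ht, hsc 0 le_rfl]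
    exact hmono 0 le_rfl t ht
  · rintro - ⟨c, hc, hcq⟩
    rw [Metric.tendsto_atTop]
    intro ε hε
    have key : ∃ s ≥ (0:ℝ), |Vsh s - Vstar| < ε := by
      by_contra! hcon
      have he : Real.exp (-ε) < 1 := Real.exp_lt_one_iff.2 (by linarith)
      obtain ⟨m, hm, hm1, hm2⟩ : ∃ m > (0:ℝ), m ≤ κ * ε ∧ m ≤ (1 - Real.exp (-ε)) * c :=
        ⟨min (κ * ε) ((1 - Real.exp (-ε)) * c),
          lt_min (mul_pos hκ hε) (mul_pos (by linarith) hc), min_le_left _ _, min_le_right _ _⟩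
      have hδ : 0 < 2 * ε * m := by positivity
      have hb : ∀ t ∈ interior (Set.Ici (0:ℝ)),
          deriv (fun s => (Vsh s - Vstar) ^ 2) t ≤ -(2 * ε * m) := by
        intro t ht
        have ht0 : t ≥ 0 := interior_subset ht
        rw [(hd t ht0).deriv]
        have hx := hcon t ht0
        rcases le_or_gt (Vsh t) Vstar with h | h
        · rw [hode1 t ht0 h]
          rw [abs_of_nonpos (by linarith)] at hx
          have h1 : ε * m ≤ (-(Vsh t - Vstar)) * (κ * (-(Vsh t - Vstar))) :=
            mul_le_mul hx (hm1.trans (mul_le_mul_of_nonneg_left hx hκ.le)) hm.le (by linarith)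
          nlinarith
        · rw [hode2 t ht0 h]
          rw [abs_of_pos (by linarith)] at hx
          have h3 : Real.exp (-(Vsh t - Vstar)) ≤ Real.exp (-ε) :=
            Real.exp_le_exp.2 (by linarith)
          have h2 : m ≤ (1 - Real.exp (-(Vsh t - Vstar))) * q t :=
            hm2.trans (mul_le_mul (by linarith) (hcq t ht0) hc.le (by linarith))
          have h1 : ε * m ≤ (Vsh t - Vstar) * ((1 - Real.exp (-(Vsh t - Vstar))) * q t) :=
            mul_le_mul hx h2 hm.le (by linarith)
          nlinarith
      have hT : 0 ≤ ((Vsh 0 - Vstar) ^ 2 + 1) / (2 * ε * m) := by positivity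
      have h := (convex_Ici (0:ℝ)).image_sub_le_mul_sub_of_deriv_le hcont hdo hb 0
        Set.self_mem_Ici _ (Set.mem_Ici.2 hT) hT
      have h4 : -(2 * ε * m) * (((Vsh 0 - Vstar) ^ 2 + 1) / (2 * ε * m) - 0)
          = -((Vsh 0 - Vstar) ^ 2 + 1) := by
        field_simp
        ring
      rw [h4] at h
      have h5 := sq_nonneg (Vsh (((Vsh 0 - Vstar) ^ 2 + 1) / (2 * ε * m)) - Vstar)
      linarith
    obtain ⟨s, hs, hsε⟩ := key
    refine ⟨s, fun t ht => ?_⟩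
    rw [Real.dist_eq, hsc t (le_trans hs ht)]
    exact (hmono s hs t ht).trans_lt hsε
end

section
/- Let V_p > 0, k > 0, c > 0, V_max > 0 and T* be real constants. Let T_p : [0,∞) → ℝ be differentiable with V_p · T_p'(t) = −k·(T_p(t) − T*) for all t ≥ 0. Let q : [0,∞) → ℝ be continuous with q(t) ≥ c for all t ≥ 0, let V : [0,∞) → ℝ be continuous with 0 < V(t) ≤ V_max for all t ≥ 0, and let T_sh : [0,∞) → ℝ be differentiable with V(t) · T_sh'(t) = q(t) · (T_p(t) − T_sh(t)) for all t ≥ 0. Then T_p(t) → T* and T_sh(t) → T* as t → ∞. -/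
open Filter

theorem aux_upper (y a u : ℝ → ℝ) (α L : ℝ) (hα : 0 < α)
    (hy : ∀ t ≥ (0:ℝ), HasDerivAt y (a t * (u t - y t)) t)
    (ha : ∀ t ≥ (0:ℝ), α ≤ a t) (hu : Tendsto u atTop (nhds L)) (ε : ℝ) (hε : 0 < ε) :
    ∀ᶠ t in atTop, y t < L + ε := by
  have h1 : ∀ᶠ t in atTop, u t < L + ε / 2 := hu.eventually_lt_const (by linarith)
  obtain ⟨s, hs⟩ := eventually_atTop.1 h1
  set t0 := max s 0 with ht0
  have ht00 : 0 ≤ t0 := le_max_right _ _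
  set K := |y t0 - (L + ε / 2)| + 1 with hK
  have hKpos : 0 < K := by positivity
  have hB : ∀ t, HasDerivAt (fun t => L + ε / 2 + K * Real.exp (-(α / 2) * (t - t0)))
      (K * (Real.exp (-(α / 2) * (t - t0)) * (-(α / 2) * 1))) t := fun t =>
    (((((hasDerivAt_id t).sub_const t0).const_mul (-(α / 2))).exp).const_mul K).const_add _
  have key : ∀ t ≥ t0, y t ≤ L + ε / 2 + K * Real.exp (-(α / 2) * (t - t0)) := by
    intro t ht
    refine image_le_of_deriv_right_lt_deriv_boundary (a := t0) (b := t) (f := y)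
      (f' := fun t => a t * (u t - y t)) ?_ ?_ ?_ hB ?_ ⟨ht, le_rfl⟩
    · intro x hx
      exact (hy x (ht00.trans hx.1)).continuousAt.continuousWithinAt
    · intro x hx
      exact (hy x (ht00.trans hx.1)).hasDerivWithinAt
    · have := le_abs_self (y t0 - (L + ε / 2))
      simp
      linarith
    · intro x hx hxe
      have hux := hs x ((le_max_left _ _).trans hx.1)
      have hax := ha x (ht00.trans hx.1)
      have hE : 0 < K * Real.exp (-(α / 2) * (x - t0)) := by positivity
      have e : K * (Real.exp (-(α / 2) * (x - t0)) * (-(α / 2) * 1))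
        = -(α / 2) * (K * Real.exp (-(α / 2) * (x - t0))) := by ring
      rw [e, hxe]
      generalize K * Real.exp (-(α / 2) * (x - t0)) = E at *
      nlinarith [mul_pos (hα.trans_le hax) (sub_pos.2 hux),
        mul_nonneg (sub_nonneg.2 hax) hE.le, mul_pos hα hE]
  have hlim : Tendsto (fun t => K * Real.exp (-(α / 2) * (t - t0))) atTop (nhds 0) := by
    have h2 : Tendsto (fun t => -(α / 2) * (t - t0)) atTop atBot :=
      (tendsto_atTop_add_const_right _ (-t0) tendsto_id).const_mul_atTop_of_neg (by linarith)
    simpa using (Real.tendsto_exp_atBot.comp h2).const_mul K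
  filter_upwards [hlim.eventually_lt_const (half_pos hε), eventually_ge_atTop t0] with t h3 h4
  linarith [key t h4]

theorem aux_tendsto (y a u : ℝ → ℝ) (α L : ℝ) (hα : 0 < α)
    (hy : ∀ t ≥ (0:ℝ), HasDerivAt y (a t * (u t - y t)) t)
    (ha : ∀ t ≥ (0:ℝ), α ≤ a t) (hu : Tendsto u atTop (nhds L)) :
    Tendsto y atTop (nhds L) := by
  rw [Metric.tendsto_nhds]
  intro ε hε
  have h2 := aux_upper (fun t => -y t) a (fun t => -u t) α (-L) hα
    (fun t ht => by
      refine (hy t ht).neg.congr_deriv ?_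
      ring) ha hu.neg ε hε
  filter_upwards [aux_upper y a u α L hα hy ha hu ε hε, h2] with t h3 h4
  rw [Real.dist_eq, abs_lt]
  constructor <;> linarith

/-- Claim (I) of the main Theorem for one producer–tank pair: the producer
temperature (under `V_p T_p' = −k (T_p − T*)`) and the cascaded hot-storage
temperature (under `V T_sh' = q (T_p − T_sh)` with `q ≥ c > 0`,
`0 < V ≤ V_max`) both converge to the producer reference temperature `T*`. -/
theorem producer_and_storage_temperature_convergence
    (Vp k c Vmax Tstar : ℝ)
    (hVp : 0 < Vp) (hk : 0 < k) (hc : 0 < c) (hVmax : 0 < Vmax)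
    (Tp : ℝ → ℝ)
    (hTpDiff : ∀ t ≥ (0:ℝ), DifferentiableAt ℝ Tp t)
    (hTpOde : ∀ t ≥ (0:ℝ), Vp * deriv Tp t = -k * (Tp t - Tstar))
    (q : ℝ → ℝ) (hqcont : ContinuousOn q (Set.Ici (0:ℝ)))
    (hq : ∀ t ≥ (0:ℝ), c ≤ q t)
    (V : ℝ → ℝ) (hVcont : ContinuousOn V (Set.Ici (0:ℝ)))
    (hV : ∀ t ≥ (0:ℝ), 0 < V t ∧ V t ≤ Vmax)
    (Tsh : ℝ → ℝ)
    (hTshDiff : ∀ t ≥ (0:ℝ), DifferentiableAt ℝ Tsh t)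
    (hTshOde : ∀ t ≥ (0:ℝ), V t * deriv Tsh t = q t * (Tp t - Tsh t)) :
    Tendsto Tp atTop (nhds Tstar) ∧ Tendsto Tsh atTop (nhds Tstar) := by
  have h1 : Tendsto Tp atTop (nhds Tstar) := by
    refine aux_tendsto Tp (fun _ => k / Vp) (fun _ => Tstar) (k / Vp) Tstar (by positivity)
      (fun t ht => ?_) (fun _ _ => le_rfl) tendsto_const_nhds
    refine (hTpDiff t ht).hasDerivAt.congr_deriv ?_
    have := hTpOde t ht
    field_simp
    linarith
  refine ⟨h1, aux_tendsto Tsh (fun t => q t / V t) Tp (c / Vmax) Tstar (by positivity)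
      (fun t ht => ?_) (fun t ht => ?_) h1⟩
  · refine (hTshDiff t ht).hasDerivAt.congr_deriv ?_
    have := hTshOde t ht
    have := (hV t ht).1
    field_simp
    linarith
  · exact div_le_div₀ (hc.le.trans (hq t ht)) (hq t ht) (hV t ht).1 (hV t ht).2
end
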